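/- Let X be a totally disconnected compact Hausdorff space, R = ℝ or ℂ (or more generally a Banach ring over which Tietze extension holds for X), and K₀, K₁ ⊆ X closed subsets. Then the natural algebra homomorphism C(K₀,R) ⊗̂_{C(X,R)} C(K₁,R) → C(K₀ ∩ K₁, R), induced by the two restriction maps, is an isomorphism of Banach algebras. -/

import Mathlib

open scoped TensorProduct

noncomputable section

/-- The restriction algebra homomorphism `C(X,𝕜) →ₐ[𝕜] C(K,𝕜)`. -/
def resHom (𝕜 : Type*) [RCLike 𝕜] {X : Type*} [TopologicalSpace X] (K : Set X) :
    C(X, 𝕜) →ₐ[𝕜] C(K, 𝕜) :=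
  ContinuousMap.compRightAlgHom 𝕜 𝕜 ⟨Subtype.val, continuous_subtype_val⟩

/-- `C(K,𝕜)` is a `C(X,𝕜)`-algebra via restriction. -/
instance algebraRes (𝕜 : Type*) [RCLike 𝕜] {X : Type*} [TopologicalSpace X] (K : Set X) :
    Algebra C(X, 𝕜) C(K, 𝕜) :=
  (resHom 𝕜 K).toRingHom.toAlgebra

/-- The projective tensor seminorm on the algebraic tensor product
`C(K₀,𝕜) ⊗[C(X,𝕜)] C(K₁,𝕜)`. -/
def projSeminorm (𝕜 : Type*) [RCLike 𝕜] {X : Type*} [TopologicalSpace X]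
    (K₀ K₁ : Set X) [CompactSpace K₀] [CompactSpace K₁]
    (t : C(K₀, 𝕜) ⊗[C(X, 𝕜)] C(K₁, 𝕜)) : ℝ :=
  sInf { s : ℝ | ∃ l : List (C(K₀, 𝕜) × C(K₁, 𝕜)),
    t = (l.map fun p => p.1 ⊗ₜ[C(X, 𝕜)] p.2).sum ∧
    s = (l.map fun p => ‖p.1‖ * ‖p.2‖).sum }

section

variable {𝕜 : Type*} [RCLike 𝕜] {X : Type*} [TopologicalSpace X]

lemma smul_one_apply_algebraRes {K : Set X} (F : C(X, 𝕜)) (x : K) :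
    (F • (1 : C(K, 𝕜))) x = F x := by
  rw [Algebra.smul_def, mul_one]
  rfl

lemma smul_apply_algebraRes {K : Set X} (F : C(X, 𝕜)) (f : C(K, 𝕜)) (x : K) :
    (F • f) x = F x * f x := by
  rw [Algebra.smul_def]
  rfl

/-- A continuous function on a closed set extends to the whole space with a norm bound. -/
lemma exists_smul_one_eq_norm_le [CompactSpace X] [T2Space X] {K : Set X} (hK : IsClosed K)
    [CompactSpace K] (f : C(K, 𝕜)) :
    ∃ F : C(X, 𝕜), F • (1 : C(K, 𝕜)) = f ∧ ‖F‖ ≤ ‖f‖ := by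
  obtain ⟨G, hG, hr⟩ := BoundedContinuousFunction.exists_norm_eq_domRestrict_eq hK 𝕜
    (BoundedContinuousFunction.mkOfCompact f)
  refine ⟨G.toContinuousMap, ?_, ?_⟩
  · ext x
    rw [smul_one_apply_algebraRes]
    exact DFunLike.congr_fun hr x
  · rw [← BoundedContinuousFunction.norm_mkOfCompact f, ← hG,
      ContinuousMap.norm_le _ (norm_nonneg _)]
    exact fun x => G.norm_coe_le_norm x

/-- A continuous function on the closed set `K₁` vanishing on `K₀ ∩ K₁` extends to a function
on `X` vanishing on `K₀`. -/
lemma exists_smul_one_eq_of_vanishing [CompactSpace X] [T2Space X] {K₀ K₁ : Set X}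
    (h₀ : IsClosed K₀) (h₁ : IsClosed K₁) (g : C(K₁, 𝕜))
    (hg : ∀ x : K₁, (x : X) ∈ K₀ → g x = 0) :
    ∃ F : C(X, 𝕜), F • (1 : C(K₀, 𝕜)) = 0 ∧ F • (1 : C(K₁, 𝕜)) = g := by
  classical
  let u : X → 𝕜 := fun x => if h : x ∈ K₁ then g ⟨x, h⟩ else 0
  have hu₁ (x : K₁) : u x = g x := by simp [u]
  have hu₀ (x : X) (hx : x ∈ K₀) : u x = 0 := by
    by_cases h : x ∈ K₁
    · simpa [u, h] using hg ⟨x, h⟩ hx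
    · simp [u, h]
  have hc₀ : ContinuousOn u K₀ := continuousOn_const.congr hu₀
  have hc₁ : ContinuousOn u K₁ := by
    rw [continuousOn_iff_continuous_domRestrict]
    exact g.continuous.congr fun x => (hu₁ x).symm
  have hc : ContinuousOn u (K₀ ∪ K₁) := hc₀.union_of_isClosed hc₁ h₀ h₁
  obtain ⟨F, hF⟩ := ContinuousMap.exists_restrict_eq (h₀.union h₁)
    (⟨_, hc.domRestrict⟩ : C(↥(K₀ ∪ K₁), 𝕜))
  have hFu (x : X) (hx : x ∈ K₀ ∪ K₁) : F x = u x := DFunLike.congr_fun hF ⟨x, hx⟩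
  refine ⟨F, ?_, ?_⟩
  · ext x
    rw [smul_one_apply_algebraRes, hFu x (.inl x.2), hu₀ x x.2]
    rfl
  · ext x
    rw [smul_one_apply_algebraRes, hFu x (.inr x.2), hu₁]

/-- The multiplication map `f ⊗ g ↦ f|_{K₀∩K₁} · g|_{K₀∩K₁}`. -/
def mulRes (𝕜 : Type*) [RCLike 𝕜] (K₀ K₁ : Set X) :
    (C(K₀, 𝕜) ⊗[C(X, 𝕜)] C(K₁, 𝕜)) →ₗ[C(X, 𝕜)] C(↥(K₀ ∩ K₁), 𝕜) :=
  TensorProduct.lift <| LinearMap.mk₂ C(X, 𝕜)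
    (fun f g => f.comp ⟨Set.inclusion Set.inter_subset_left,
            continuous_inclusion Set.inter_subset_left⟩ *
          g.comp ⟨Set.inclusion Set.inter_subset_right,
            continuous_inclusion Set.inter_subset_right⟩)
    (fun _ _ _ => by ext; simp [add_mul])
    (fun _ _ _ => by ext; simp [smul_apply_algebraRes, mul_assoc])
    (fun _ _ _ => by ext; simp [mul_add])
    (fun _ _ _ => by ext; simp [smul_apply_algebraRes, mul_left_comm])

lemma mulRes_tmul {K₀ K₁ : Set X} (f : C(K₀, 𝕜)) (g : C(K₁, 𝕜)) :
    mulRes 𝕜 K₀ K₁ (f ⊗ₜ g) =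
      f.comp ⟨Set.inclusion Set.inter_subset_left,
        continuous_inclusion Set.inter_subset_left⟩ *
      g.comp ⟨Set.inclusion Set.inter_subset_right,
        continuous_inclusion Set.inter_subset_right⟩ :=
  rfl

lemma mulRes_one_tmul_apply {K₀ K₁ : Set X} (g : C(K₁, 𝕜)) (x : ↥(K₀ ∩ K₁)) :
    mulRes 𝕜 K₀ K₁ (1 ⊗ₜ g) x = g ⟨x, x.2.2⟩ := by
  rw [mulRes_tmul]
  exact one_mul _

lemma mulRes_one_tmul_smul_one {K₀ K₁ : Set X} (F : C(X, 𝕜)) :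
    mulRes 𝕜 K₀ K₁ (1 ⊗ₜ (F • 1)) = F • 1 := by
  ext x
  rw [mulRes_one_tmul_apply, smul_one_apply_algebraRes, smul_one_apply_algebraRes]

lemma exists_eq_one_tmul [CompactSpace X] [T2Space X] {K₀ K₁ : Set X} (h₀ : IsClosed K₀)
    [CompactSpace K₀] (t : C(K₀, 𝕜) ⊗[C(X, 𝕜)] C(K₁, 𝕜)) :
    ∃ g : C(K₁, 𝕜), t = 1 ⊗ₜ g := by
  induction t with
  | zero => exact ⟨0, (TensorProduct.tmul_zero _ _).symm⟩
  | tmul f g =>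
    obtain ⟨F, rfl, -⟩ := exists_smul_one_eq_norm_le h₀ f
    exact ⟨F • g, TensorProduct.smul_tmul _ _ _⟩
  | add s t hs ht =>
    obtain ⟨g, rfl⟩ := hs
    obtain ⟨g', rfl⟩ := ht
    exact ⟨g + g', (TensorProduct.tmul_add _ _ _).symm⟩

lemma mulRes_injective [CompactSpace X] [T2Space X] {K₀ K₁ : Set X} (h₀ : IsClosed K₀)
    (h₁ : IsClosed K₁) [CompactSpace K₀] : Function.Injective (mulRes 𝕜 K₀ K₁) := by
  rw [injective_iff_map_eq_zero]
  intro t ht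
  obtain ⟨g, rfl⟩ := exists_eq_one_tmul h₀ t
  obtain ⟨F, hF₀, hF₁⟩ := exists_smul_one_eq_of_vanishing h₀ h₁ g fun x hx => by
    rw [← mulRes_one_tmul_apply g ⟨x, hx, x.2⟩, ht]
    rfl
  rw [← hF₁, ← TensorProduct.smul_tmul, hF₀, TensorProduct.zero_tmul]

lemma projSeminorm_tmul_le {K₀ K₁ : Set X} [CompactSpace K₀] [CompactSpace K₁]
    (f : C(K₀, 𝕜)) (g : C(K₁, 𝕜)) :
    projSeminorm 𝕜 K₀ K₁ (f ⊗ₜ g) ≤ ‖f‖ * ‖g‖ := by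
  refine csInf_le ⟨0, ?_⟩ ⟨[(f, g)], by simp, by simp⟩
  rintro _ ⟨l, -, rfl⟩
  refine List.sum_nonneg fun a ha => ?_
  obtain ⟨p, -, rfl⟩ := List.mem_map.1 ha
  positivity

lemma exists_list_tmul_sum {K₀ K₁ : Set X} (t : C(K₀, 𝕜) ⊗[C(X, 𝕜)] C(K₁, 𝕜)) :
    ∃ l : List (C(K₀, 𝕜) × C(K₁, 𝕜)), t = (l.map fun p => p.1 ⊗ₜ[C(X, 𝕜)] p.2).sum := by
  induction t with
  | zero => exact ⟨[], rfl⟩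
  | tmul f g => exact ⟨[(f, g)], by simp⟩
  | add s t hs ht =>
    obtain ⟨l, rfl⟩ := hs
    obtain ⟨l', rfl⟩ := ht
    exact ⟨l ++ l', by simp⟩

lemma norm_comp_le {Y Z : Type*} [TopologicalSpace Y] [TopologicalSpace Z] [CompactSpace Y]
    [CompactSpace Z] (f : C(Z, 𝕜)) (i : C(Y, Z)) : ‖f.comp i‖ ≤ ‖f‖ :=
  (ContinuousMap.norm_le _ (norm_nonneg _)).2 fun y => f.norm_coe_le_norm (i y)

lemma norm_mulRes_le_projSeminorm {K₀ K₁ : Set X} [CompactSpace K₀] [CompactSpace K₁]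
    [CompactSpace ↥(K₀ ∩ K₁)] (t : C(K₀, 𝕜) ⊗[C(X, 𝕜)] C(K₁, 𝕜)) :
    ‖mulRes 𝕜 K₀ K₁ t‖ ≤ projSeminorm 𝕜 K₀ K₁ t := by
  obtain ⟨l, hl⟩ := exists_list_tmul_sum t
  refine le_csInf ⟨_, l, hl, rfl⟩ ?_
  rintro _ ⟨l, rfl, rfl⟩
  clear hl
  induction l with
  | nil => simp
  | cons p l ih =>
    simp only [List.map_cons, List.sum_cons, map_add] at ih ⊢
    refine (norm_add_le _ _).trans (add_le_add ?_ ih)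
    rw [mulRes_tmul]
    exact (norm_mul_le _ _).trans
      (mul_le_mul (norm_comp_le _ _) (norm_comp_le _ _) (norm_nonneg _) (norm_nonneg _))

lemma projSeminorm_le_norm_mulRes [CompactSpace X] [T2Space X] {K₀ K₁ : Set X}
    (h₀ : IsClosed K₀) (h₁ : IsClosed K₁) [CompactSpace K₀] [CompactSpace K₁]
    [CompactSpace ↥(K₀ ∩ K₁)] (t : C(K₀, 𝕜) ⊗[C(X, 𝕜)] C(K₁, 𝕜)) :
    projSeminorm 𝕜 K₀ K₁ t ≤ ‖mulRes 𝕜 K₀ K₁ t‖ := by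
  obtain ⟨F, hF, hFn⟩ := exists_smul_one_eq_norm_le (h₀.inter h₁) (mulRes 𝕜 K₀ K₁ t)
  obtain rfl : (1 : C(K₀, 𝕜)) ⊗ₜ[C(X, 𝕜)] (F • (1 : C(K₁, 𝕜))) = t :=
    mulRes_injective h₀ h₁ ((mulRes_one_tmul_smul_one F).trans hF)
  have h1 : ‖(1 : C(K₀, 𝕜))‖ ≤ 1 :=
    (ContinuousMap.norm_le _ zero_le_one).2 fun x => by simp
  have h2 : ‖F • (1 : C(K₁, 𝕜))‖ ≤ ‖F‖ :=
    (ContinuousMap.norm_le _ (norm_nonneg _)).2 fun x => by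
      rw [smul_one_apply_algebraRes]
      exact F.norm_coe_le_norm x
  calc _ ≤ ‖(1 : C(K₀, 𝕜))‖ * ‖F • (1 : C(K₁, 𝕜))‖ := projSeminorm_tmul_le _ _
    _ ≤ 1 * ‖F‖ := mul_le_mul h1 h2 (norm_nonneg _) zero_le_one
    _ ≤ _ := by rwa [one_mul]

lemma mulRes_surjective [CompactSpace X] [T2Space X] {K₀ K₁ : Set X} (h₀ : IsClosed K₀)
    (h₁ : IsClosed K₁) [CompactSpace ↥(K₀ ∩ K₁)] : Function.Surjective (mulRes 𝕜 K₀ K₁) := by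
  intro f
  obtain ⟨F, rfl, -⟩ := exists_smul_one_eq_norm_le (h₀.inter h₁) f
  exact ⟨_, mulRes_one_tmul_smul_one F⟩

end

/-- The natural multiplication map
`C(K₀,𝕜) ⊗̂_{C(X,𝕜)} C(K₁,𝕜) → C(K₀ ∩ K₁, 𝕜)` is an isomorphism of Banach algebras:
the algebraic map `f ⊗ g ↦ f|_{K₀∩K₁} · g|_{K₀∩K₁}` is bounded for the projective
tensor seminorm, bounded below by it (up to a constant), and has dense range; hence it
induces an isomorphism on completions. -/
theorem stmt11 {X : Type*} [TopologicalSpace X] [CompactSpace X] [T2Space X]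
    {𝕜 : Type*} [RCLike 𝕜] (K₀ K₁ : Set X) (h₀ : IsClosed K₀) (h₁ : IsClosed K₁)
    [CompactSpace K₀] [CompactSpace K₁] [CompactSpace ↥(K₀ ∩ K₁)] :
    ∃ μ : (C(K₀, 𝕜) ⊗[C(X, 𝕜)] C(K₁, 𝕜)) →ₗ[C(X, 𝕜)] C(↥(K₀ ∩ K₁), 𝕜),
      (∀ (f : C(K₀, 𝕜)) (g : C(K₁, 𝕜)),
        μ (f ⊗ₜ g) =
          f.comp ⟨Set.inclusion Set.inter_subset_left,
            continuous_inclusion Set.inter_subset_left⟩ *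
          g.comp ⟨Set.inclusion Set.inter_subset_right,
            continuous_inclusion Set.inter_subset_right⟩) ∧
      (∀ t, ‖μ t‖ ≤ projSeminorm 𝕜 K₀ K₁ t) ∧
      (∃ c : ℝ, 0 < c ∧ ∀ t, projSeminorm 𝕜 K₀ K₁ t ≤ c * ‖μ t‖) ∧
      DenseRange μ := by
  exact ⟨mulRes 𝕜 K₀ K₁, mulRes_tmul, norm_mulRes_le_projSeminorm,
    ⟨1, one_pos, fun t => (projSeminorm_le_norm_mulRes h₀ h₁ t).trans_eq (one_mul _).symm⟩,
    (mulRes_surjective h₀ h₁).denseRange⟩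

end
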